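/- There exist absolute constants a, b > 0 such that for every n ≥ 2, every truly n-variate Boolean function f : {0,1}^n → {0,1} of sensitivity s ≥ 2 satisfies pdeg(f) ≥ a · (log₂ n − b·log₂ s) / log₂ s. -/

import Mathlib

open scoped Classical

noncomputable def evalBool {ι : Type} (a : ι → Bool) (P : MvPolynomial ι ℝ) : ℝ :=
  MvPolynomial.eval (fun i => if a i then (1:ℝ) else 0) P

def HasProbPoly {ι : Type} (f : (ι → Bool) → Bool) (ε : ℝ) (d : ℕ) : Prop :=
  ∃ (k : ℕ) (w : Fin k → ℝ) (P : Fin k → MvPolynomial ι ℝ),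
    (∀ i, 0 ≤ w i) ∧ (∑ i, w i = 1) ∧ (∀ i, (P i).totalDegree ≤ d) ∧
    ∀ a : ι → Bool,
      ∑ i ∈ Finset.univ.filter
          (fun i => evalBool a (P i) ≠ (if f a then (1:ℝ) else 0)), w i ≤ ε

noncomputable def pdeg {ι : Type} (ε : ℝ) (f : (ι → Bool) → Bool) : ℕ :=
  sInf {d | HasProbPoly f ε d}

def TrulyVariate {ι : Type} (f : (ι → Bool) → Bool) : Prop :=
  ∀ i : ι, ∃ a, f (Function.update a i (!(a i))) ≠ f a

def ORf (n : ℕ) : (Fin n → Bool) → Bool := fun a => decide (∃ i, a i = true)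

noncomputable def sensitivity {n : ℕ} (f : (Fin n → Bool) → Bool) : ℕ :=
  Finset.univ.sup (fun a : Fin n → Bool =>
    (Finset.univ.filter (fun i : Fin n => f (Function.update a i (!(a i))) ≠ f a)).card)


noncomputable def sg (b : Bool) : ℝ := if b then -1 else 1

lemma sg_not (b : Bool) : sg (!b) = - sg b := by cases b <;> simp [sg]

lemma sg_mul_self (b : Bool) : sg b * sg b = 1 := by cases b <;> simp [sg]

lemma sg_xor (a b : Bool) : sg (xor a b) = sg a * sg b := by cases a <;> cases b <;> simp [sg]

noncomputable def toR (b : Bool) : ℝ := if b then 1 else 0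

noncomputable def chi {n : ℕ} (S : Finset (Fin n)) (x : Fin n → Bool) : ℝ := ∏ i ∈ S, sg (x i)

def flp {n : ℕ} (x : Fin n → Bool) (i : Fin n) : Fin n → Bool := Function.update x i (!(x i))

lemma flp_same {n : ℕ} (x : Fin n → Bool) (i : Fin n) : flp x i i = !(x i) := by simp [flp]

lemma flp_ne {n : ℕ} (x : Fin n → Bool) {i j : Fin n} (h : j ≠ i) : flp x i j = x j := by
  simp [flp, h]

lemma flp_flp {n : ℕ} (x : Fin n → Bool) (i : Fin n) : flp (flp x i) i = x := by
  funext j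
  by_cases h : j = i
  · subst h; simp [flp]
  · simp [flp, h]

lemma flp_comm {n : ℕ} (x : Fin n → Bool) (i j : Fin n) : flp (flp x i) j = flp (flp x j) i := by
  by_cases hij : i = j
  · subst hij; rfl
  funext k
  by_cases h : k = i
  · subst h; simp [flp, hij]
  · by_cases h' : k = j
    · subst h'; simp [flp, h]
    · simp [flp, h, h']

lemma prod_sg_flp_mem {n : ℕ} (S : Finset (Fin n)) (x : Fin n → Bool) {i : Fin n} (hi : i ∈ S) :
    ∏ j ∈ S, sg (flp x i j) = - ∏ j ∈ S, sg (x j) := by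
  rw [← Finset.mul_prod_erase S _ hi, ← Finset.mul_prod_erase S (fun j => sg (x j)) hi, flp_same,
    sg_not]
  rw [Finset.prod_congr rfl (g := fun j => sg (x j))]
  · ring
  · intro j hj
    rw [flp_ne x (Finset.ne_of_mem_erase hj)]

lemma prod_sg_flp_not_mem {n : ℕ} (S : Finset (Fin n)) (x : Fin n → Bool) {i : Fin n}
    (hi : i ∉ S) : ∏ j ∈ S, sg (flp x i j) = ∏ j ∈ S, sg (x j) := by
  refine Finset.prod_congr rfl fun j hj => ?_
  have hne : j ≠ i := fun h => hi (h ▸ hj)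
  rw [flp_ne x hne]

lemma chi_sq {n : ℕ} (S : Finset (Fin n)) (x : Fin n → Bool) : chi S x * chi S x = 1 := by
  unfold chi
  rw [← Finset.prod_mul_distrib]
  exact Finset.prod_eq_one fun i _ => sg_mul_self _

lemma chi_flp {n : ℕ} (S : Finset (Fin n)) (x : Fin n → Bool) {i : Fin n} (hi : i ∈ S) :
    chi S (flp x i) = - chi S x := prod_sg_flp_mem S x hi

/-- The signed adjacency operator in the directions `S`. -/
noncomputable def hA {n : ℕ} (S : Finset (Fin n)) : ((Fin n → Bool) → ℝ) →ₗ[ℝ] ((Fin n → Bool) → ℝ) where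
  toFun v := fun x => ∑ i ∈ S, chi (Finset.Iio i) x * v (flp x i)
  map_add' u v := by
    funext x
    simp [mul_add, Finset.sum_add_distrib]
  map_smul' c v := by
    funext x
    simp only [Pi.smul_apply, smul_eq_mul, RingHom.id_apply, Finset.mul_sum]
    exact Finset.sum_congr rfl fun i _ => by ring

lemma hA_apply {n : ℕ} (S : Finset (Fin n)) (v : (Fin n → Bool) → ℝ) (x : Fin n → Bool) :
    hA S v x = ∑ i ∈ S, chi (Finset.Iio i) x * v (flp x i) := rfl

lemma hA_sq {n : ℕ} (S : Finset (Fin n)) (v : (Fin n → Bool) → ℝ) :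
    hA S (hA S v) = (S.card : ℝ) • v := by
  funext x
  simp only [hA_apply, Finset.mul_sum, Pi.smul_apply, smul_eq_mul]
  set t : Fin n → Fin n → ℝ := fun i j =>
    chi (Finset.Iio i) x * (chi (Finset.Iio j) (flp x i) * v (flp (flp x i) j)) with ht
  have key : ∀ i j, t i j + t j i = if i = j then 2 * v x else 0 := by
    have lt_case : ∀ i j : Fin n, i < j → t i j + t j i = 0 := by
      intro i j hij
      simp only [ht]
      rw [flp_comm x j i]
      have h1 : chi (Finset.Iio j) (flp x i) = - chi (Finset.Iio j) x :=
        prod_sg_flp_mem _ _ (Finset.mem_Iio.2 hij)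
      have h2 : chi (Finset.Iio i) (flp x j) = chi (Finset.Iio i) x :=
        prod_sg_flp_not_mem _ _ (by simp [hij.le])
      rw [h1, h2]; ring
    intro i j
    rcases lt_trichotomy i j with h | h | h
    · rw [if_neg h.ne, lt_case i j h]
    · subst h
      simp only [ht, if_true]
      have h2 : chi (Finset.Iio i) (flp x i) = chi (Finset.Iio i) x :=
        prod_sg_flp_not_mem _ _ (by simp)
      rw [h2, flp_flp]
      linear_combination 2 * v x * chi_sq (Finset.Iio i) x
    · rw [if_neg h.ne', add_comm, lt_case j i h]
  have h1 : ∑ i ∈ S, ∑ j ∈ S, (t i j + t j i) = 2 * (S.card * v x) := by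
    simp only [key]
    rw [Finset.sum_congr rfl (g := fun _ => 2 * v x)]
    · simp; ring
    · intro i hi
      simp [hi]
  have h2 : ∑ i ∈ S, ∑ j ∈ S, (t i j + t j i) = 2 * ∑ i ∈ S, ∑ j ∈ S, t i j := by
    simp only [Finset.sum_add_distrib]
    rw [Finset.sum_comm (f := fun i j => t j i)]
    ring
  have : ∑ i ∈ S, ∑ j ∈ S, t i j = S.card * v x := by linarith
  exact this

lemma sens_le {n : ℕ} (f : (Fin n → Bool) → Bool) (x : Fin n → Bool) :
    (Finset.univ.filter (fun i : Fin n => f (flp x i) ≠ f x)).card ≤ sensitivity f := by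
  unfold sensitivity
  exact Finset.le_sup (f := fun a : Fin n → Bool =>
    (Finset.univ.filter (fun i : Fin n => f (Function.update a i (!(a i))) ≠ f a)).card)
    (Finset.mem_univ x)

lemma huang_core {n : ℕ} (f : (Fin n → Bool) → Bool) (S : Finset (Fin n)) (c : ℝ) (hc : c ≠ 0)
    (hcard : (Finset.univ.filter (fun x => ¬ (f x = true ↔ chi S x = c))).card
      < (Finset.univ.filter (fun x => chi S x = c)).card) :
    S.card ≤ (sensitivity f) ^ 2 := by
  rcases Finset.eq_empty_or_nonempty S with hS | hS
  · simp [hS]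
  set V := Finset.univ.filter (fun x : Fin n → Bool => chi S x = c) with hV
  set Bc := Finset.univ.filter (fun x => ¬ (f x = true ↔ chi S x = c)) with hB
  set r : ℝ := Real.sqrt S.card with hr
  have hr2 : r * r = S.card := Real.mul_self_sqrt (by positivity)
  have hrpos : 0 < r := Real.sqrt_pos.2 (by exact_mod_cast hS.card_pos)
  -- extension by zero
  let ext : (V → ℝ) →ₗ[ℝ] ((Fin n → Bool) → ℝ) :=
    { toFun := fun u x => if h : x ∈ V then u ⟨x, h⟩ else 0
      map_add' := by intro u v; funext x; by_cases h : x ∈ V <;> simp [h]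
      map_smul' := by intro a v; funext x; by_cases h : x ∈ V <;> simp [h] }
  let W : (V → ℝ) →ₗ[ℝ] ((Fin n → Bool) → ℝ) := r • ext + (hA S).comp ext
  let res : ((Fin n → Bool) → ℝ) →ₗ[ℝ] (Bc → ℝ) := LinearMap.funLeft ℝ ℝ (fun x : Bc => x.1)
  have hker : (res.comp W).ker ≠ ⊥ := by
    apply LinearMap.ker_ne_bot_of_finrank_lt
    simpa using hcard
  obtain ⟨u, hu, hu0⟩ := (Submodule.ne_bot_iff _).1 hker
  have hWu : ∀ x ∈ Bc, W u x = 0 := by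
    intro x hx
    have := congrFun (LinearMap.mem_ker.1 hu) ⟨x, hx⟩
    simpa [res, LinearMap.funLeft] using this
  set w := W u with hw
  have hAw : hA S w = r • w := by
    have : w = r • ext u + hA S (ext u) := rfl
    rw [this, map_add, map_smul, hA_sq, smul_add, smul_smul, hr2, add_comm]
  have hw0 : w ≠ 0 := by
    obtain ⟨⟨x, hx⟩, hux⟩ := Function.ne_iff.1 hu0
    intro h0
    have h1 : w x = r * ext u x + hA S (ext u) x := rfl
    have h2 : hA S (ext u) x = 0 := by
      rw [hA_apply]
      refine Finset.sum_eq_zero fun i hi => ?_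
      have : flp x i ∉ V := by
        have hx' : chi S x = c := (Finset.mem_filter.1 hx).2
        simp only [hV, Finset.mem_filter, Finset.mem_univ, true_and]
        rw [chi_flp S x hi, hx']
        intro h
        apply hc; linarith
      have : ext u (flp x i) = 0 := by simp [ext, this]
      rw [this, mul_zero]
    have h3 : ext u x = u ⟨x, hx⟩ := by simp [ext, hx]
    rw [h0, h2, h3] at h1
    simp only [Pi.zero_apply, add_zero] at h1 hux
    exact (mul_ne_zero hrpos.ne' hux) h1.symm
  obtain ⟨x, -, hx⟩ := Finset.exists_max_image Finset.univ (fun x => |w x|) Finset.univ_nonempty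
  have hwx : 0 < |w x| := by
    obtain ⟨z, hz⟩ := Function.ne_iff.1 hw0
    exact lt_of_lt_of_le (abs_pos.2 hz) (hx z (Finset.mem_univ _))
  have hxB : x ∉ Bc := fun h => by rw [hWu x h] at hwx; simp at hwx
  have hxH : (f x = true ↔ chi S x = c) := by
    by_contra h
    exact hxB (Finset.mem_filter.2 ⟨Finset.mem_univ _, h⟩)
  set N := Finset.univ.filter (fun i : Fin n => f (flp x i) ≠ f x) with hN
  have hchi : ∀ y, chi S y = 1 ∨ chi S y = -1 := fun y => mul_self_eq_one_iff.1 (chi_sq S y)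
  have hsens : ∀ i ∈ S, i ∉ N → w (flp x i) = 0 := by
    intro i hi hiN
    apply hWu
    refine Finset.mem_filter.2 ⟨Finset.mem_univ _, ?_⟩
    have hf : f (flp x i) = f x := by simpa [hN] using hiN
    have h2 := chi_flp S x hi
    rw [hf, hxH, h2]
    by_cases hcc : chi S x = c
    · simp only [hcc, true_iff]
      intro h; apply hc; linarith
    · simp only [hcc, false_iff, not_not]
      -- here c must be minus chi S x as V is nonempty
      have hVne : V.Nonempty := Finset.card_pos.1 (by omega)
      obtain ⟨z, hz⟩ := hVne
      have hz' : chi S z = c := (Finset.mem_filter.1 hz).2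
      rcases hchi x with h | h <;> rcases hchi z with h' | h' <;> rw [hz'] at h'
      · exact absurd (h.trans h'.symm) hcc
      · rw [h, h']
      · rw [h, h']; norm_num
      · exact absurd (h.trans h'.symm) hcc
  have hle : r * |w x| ≤ (S ∩ N).card * |w x| := by
    calc r * |w x| = |hA S w x| := by
          rw [hAw]; simp [abs_mul, abs_of_pos hrpos]
      _ ≤ ∑ i ∈ S, |chi (Finset.Iio i) x * w (flp x i)| := by
          rw [hA_apply]; exact Finset.abs_sum_le_sum_abs _ _
      _ ≤ ∑ i ∈ S, if i ∈ N then |w x| else 0 := by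
          refine Finset.sum_le_sum fun i hi => ?_
          split_ifs with h
          · rw [abs_mul]
            have : |chi (Finset.Iio i) x| = 1 := by
              rcases mul_self_eq_one_iff.1 (chi_sq (Finset.Iio i) x) with h | h <;> rw [h] <;> simp
            rw [this, one_mul]
            exact hx _ (Finset.mem_univ _)
          · rw [hsens i hi h]; simp
      _ = (S ∩ N).card * |w x| := by
          rw [← Finset.sum_filter, Finset.sum_const, nsmul_eq_mul, Finset.filter_mem_eq_inter]
  have hle2 : r ≤ (sensitivity f : ℝ) := by
    have h1 : r ≤ (S ∩ N).card := le_of_mul_le_mul_right hle hwx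
    have h2 : (S ∩ N).card ≤ sensitivity f :=
      (Finset.card_le_card Finset.inter_subset_right).trans (sens_le f x)
    exact h1.trans (by exact_mod_cast h2)
  have : (S.card : ℝ) ≤ (sensitivity f : ℝ) ^ 2 := by
    rw [← hr2]; nlinarith
  exact_mod_cast this

lemma huang {n : ℕ} (f : (Fin n → Bool) → Bool) (S : Finset (Fin n))
    (h : ∑ x, toR (f x) * chi S x ≠ 0) : S.card ≤ (sensitivity f) ^ 2 := by
  have hchi : ∀ y, chi S y = 1 ∨ chi S y = -1 := fun y => mul_self_eq_one_iff.1 (chi_sq S y)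
  -- signed difference of sizes
  have key : ∀ c : ℝ, (c = 1 ∨ c = -1) →
      ((Finset.univ.filter (fun x => chi S x = c)).card : ℝ) -
      (Finset.univ.filter (fun x => ¬ (f x = true ↔ chi S x = c))).card
        = c * ∑ x, toR (f x) * chi S x := by
    intro c hc
    rw [Finset.card_filter, Finset.card_filter, Finset.mul_sum]
    push_cast
    rw [← Finset.sum_sub_distrib]
    refine Finset.sum_congr rfl fun x _ => ?_
    rcases hc with rfl | rfl <;> rcases hchi x with hx | hx <;> rw [hx] <;>
      cases f x <;> norm_num [toR]
  rcases lt_or_gt_of_ne h with h | h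
  · apply huang_core f S (-1) (by norm_num)
    have := key (-1) (Or.inr rfl)
    have h2 : ((Finset.univ.filter (fun x => ¬ (f x = true ↔ chi S x = -1))).card : ℝ) <
      (Finset.univ.filter (fun x => chi S x = -1)).card := by linarith
    exact_mod_cast h2
  · apply huang_core f S 1 (by norm_num)
    have := key 1 (Or.inl rfl)
    have h2 : ((Finset.univ.filter (fun x => ¬ (f x = true ↔ chi S x = 1))).card : ℝ) <
      (Finset.univ.filter (fun x => chi S x = 1)).card := by linarith
    exact_mod_cast h2

noncomputable def fc {n : ℕ} (f : (Fin n → Bool) → Bool) (S : Finset (Fin n)) : ℝ :=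
  ∑ z, toR (f z) * chi S z

lemma fourier_inv {n : ℕ} (f : (Fin n → Bool) → Bool) (x : Fin n → Bool) :
    ∑ S, fc f S * chi S x = 2 ^ n * toR (f x) := by
  have h1 : ∀ z : Fin n → Bool, ∑ S, chi S z * chi S x = if z = x then (2 : ℝ) ^ n else 0 := by
    intro z
    have : ∑ S, chi S z * chi S x = ∏ i, (1 + sg (z i) * sg (x i)) := by
      rw [Finset.prod_one_add]
      simp only [chi, Finset.prod_mul_distrib, Finset.powerset_univ]
    rw [this]
    split_ifs with h
    · subst h
      simp only [sg_mul_self]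
      norm_num
    · obtain ⟨i, hi⟩ := Function.ne_iff.1 h
      refine Finset.prod_eq_zero (Finset.mem_univ i) ?_
      revert hi
      cases z i <;> cases x i <;> simp [sg]
  simp only [fc, Finset.sum_mul]
  rw [Finset.sum_comm]
  simp only [mul_assoc, ← Finset.mul_sum, h1]
  simp [mul_comm]

noncomputable def xs {n k : ℕ} (a : Fin n → Bool) (B : Fin k → Finset (Fin n)) (y : Fin k → Bool) :
    Fin n → Bool := fun i => xor (a i) (decide (∃ b, i ∈ B b ∧ y b = true))

lemma chi_xs {n k : ℕ} (a : Fin n → Bool) (B : Fin k → Finset (Fin n))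
    (hB : ∀ b b', b ≠ b' → Disjoint (B b) (B b')) (y : Fin k → Bool) (M : Finset (Fin n)) :
    chi M (xs a B y) = chi M a * ∏ b, sg (y b) ^ (M.filter (fun i => i ∈ B b)).card := by
  have h1 : ∀ i, sg (decide (∃ b, i ∈ B b ∧ y b = true)) = ∏ b, if i ∈ B b then sg (y b) else 1 := by
    intro i
    by_cases h : ∃ b, i ∈ B b
    · obtain ⟨b, hb⟩ := h
      have huniq : ∀ b', i ∈ B b' → b' = b := by
        intro b' hb'
        by_contra hne
        exact Finset.disjoint_left.1 (hB b' b hne) hb' hb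
      rw [Finset.prod_eq_single b]
      · simp only [hb, if_true]
        congr 1
        cases hy : y b
        · simp only [decide_eq_false_iff_not]
          rintro ⟨b', hb', hy'⟩
          rw [huniq b' hb', hy] at hy'
          cases hy'
        · simp only [decide_eq_true_eq]
          exact ⟨b, hb, hy⟩
      · intro b' _ hne
        rw [if_neg fun h => hne (huniq b' h)]
      · simp
    · push Not at h
      rw [Finset.prod_eq_one]
      · simp [h, sg]
      · intro b _
        rw [if_neg (h b)]
  unfold chi xs
  simp only [sg_xor, Finset.prod_mul_distrib, h1]
  congr 1
  rw [Finset.prod_comm]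
  refine Finset.prod_congr rfl fun b _ => ?_
  rw [← Finset.prod_filter, Finset.prod_const]

lemma sum_prod_bool {k : ℕ} (g : Fin k → Bool → ℝ) :
    ∑ y : Fin k → Bool, ∏ b, g b (y b) = ∏ b, (g b true + g b false) := by
  have := Finset.prod_univ_sum (fun _ : Fin k => (Finset.univ : Finset Bool)) g
  rw [Fintype.piFinset_univ] at this
  rw [← this]
  simp

open Polynomial in
lemma block_bound {n k : ℕ} (f : (Fin n → Bool) → Bool) (a : Fin n → Bool)
    (B : Fin k → Finset (Fin n)) (hB : ∀ b b', b ≠ b' → Disjoint (B b) (B b'))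
    (hs : ∀ b, f (fun i => xor (a i) (decide (i ∈ B b))) ≠ f a) :
    k ≤ 2 * (sensitivity f) ^ 4 := by
  set D := (sensitivity f) ^ 2 with hD
  let o : Finset (Fin n) → ℕ := fun M =>
    (Finset.univ.filter (fun b => Odd (M.filter (fun i => i ∈ B b)).card)).card
  have ho : ∀ M, o M ≤ M.card := by
    intro M
    -- choose an element of each odd block
    have hne : ∀ b ∈ Finset.univ.filter (fun b => Odd (M.filter (fun i => i ∈ B b)).card),
        ∃ i, i ∈ M ∧ i ∈ B b := by
      intro b hb
      have := (Finset.mem_filter.1 hb).2.pos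
      obtain ⟨i, hi⟩ := Finset.card_pos.1 this
      exact ⟨i, Finset.mem_filter.1 hi⟩
    rcases isEmpty_or_nonempty (Fin n) with he | he
    · have : Finset.univ.filter (fun b => Odd (M.filter (fun i => i ∈ B b)).card) = ∅ := by
        refine Finset.eq_empty_of_forall_notMem fun b hb => ?_
        exact he.elim (hne b hb).choose
      simp only [o]
      rw [this]
      simp
    choose! g hg using hne
    refine Finset.card_le_card_of_injOn g (fun b hb => (hg b hb).1) ?_
    intro b hb b' hb' h
    by_contra hne
    have h2 := (hg b' hb').2
    rw [← h] at h2
    exact Finset.disjoint_left.1 (hB b b' hne) (hg b hb).2 h2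
  let R : ℝ[X] := ∑ M, C (fc f M / 2 ^ n * chi M a) * X ^ (o M)
  let w : ℝ → (Fin k → Bool) → ℝ := fun r y => ∏ b, if y b then (1 - r) / 2 else (1 + r) / 2
  have hR : ∀ r, R.eval r = ∑ y, toR (f (xs a B y)) * w r y := by
    intro r
    have h1 : ∀ M, ∑ y, chi M (xs a B y) * w r y = chi M a * r ^ (o M) := by
      intro M
      simp only [chi_xs a B hB, mul_assoc, ← Finset.mul_sum]
      congr 1
      simp only [w, ← Finset.prod_mul_distrib]
      rw [sum_prod_bool (fun b v => sg v ^ (M.filter (fun i => i ∈ B b)).card *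
        if v then (1 - r) / 2 else (1 + r) / 2)]
      rw [← Finset.prod_const, Finset.prod_filter]
      refine Finset.prod_congr rfl fun b _ => ?_
      by_cases h : Odd (M.filter (fun i => i ∈ B b)).card
      · rw [if_pos h]; simp [sg, h.neg_one_pow]; ring
      · rw [if_neg h]; simp [sg, (Nat.not_odd_iff_even.1 h).neg_one_pow]; ring
    have h2 : ∀ x, toR (f x) = ∑ M, fc f M / 2 ^ n * chi M x := by
      intro x
      have := fourier_inv f x
      simp only [div_mul_eq_mul_div, ← Finset.sum_div, this]
      field_simp
    simp only [h2, Finset.sum_mul]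
    rw [Finset.sum_comm]
    simp only [mul_assoc, ← Finset.mul_sum, h1]
    simp [R, eval_finsetSum, mul_assoc]
  have hRpoly : R = ∑ y, C (toR (f (xs a B y))) *
      ∏ b, (if y b then C (1 / 2) * (1 - X) else C (1 / 2) * (1 + X)) := by
    apply Polynomial.funext
    intro r
    rw [hR]
    simp only [eval_finsetSum, eval_mul, eval_C, eval_prod, w]
    refine Finset.sum_congr rfl fun y _ => ?_
    congr 1
    refine Finset.prod_congr rfl fun b _ => ?_
    split_ifs <;> simp <;> ring
  have hdeg : R.degree ≤ D := by
    refine (degree_sum_le _ _).trans (Finset.sup_le fun M _ => ?_)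
    by_cases h : fc f M = 0
    · simp [h]
    · refine (degree_C_mul_X_pow_le _ _).trans ?_
      exact_mod_cast (ho M).trans (huang f M h)
  have hbd : ∀ r ∈ Set.Icc (-1 : ℝ) 1, |R.eval r| ≤ 1 := by
    intro r hr
    have hw : ∀ y, 0 ≤ w r y := by
      intro y
      refine Finset.prod_nonneg fun b _ => ?_
      split_ifs <;> linarith [hr.1, hr.2]
    have hw1 : ∑ y, w r y = 1 := by
      simp only [w]
      rw [sum_prod_bool (fun b v => if v then (1 - r) / 2 else (1 + r) / 2)]
      refine Finset.prod_eq_one fun b _ => ?_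
      simp; ring
    have ht : ∀ b, 0 ≤ toR b ∧ toR b ≤ 1 := by intro b; cases b <;> simp [toR]
    rw [hR, abs_of_nonneg (Finset.sum_nonneg fun y _ => mul_nonneg (ht _).1 (hw y)), ← hw1]
    exact Finset.sum_le_sum fun y _ => mul_le_of_le_one_left (hw y) (ht _).2
  have hxs0 : xs a B (fun _ => false) = a := by
    funext i; simp [xs]
  have hxs1 : ∀ b, xs a B (Function.update (fun _ => false) b true) =
      fun i => xor (a i) (decide (i ∈ B b)) := by
    intro b; funext i
    simp only [xs]
    congr 2
    simp [Function.update_apply]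
  have hder : (derivative R).eval 1 = ∑ b, (toR (f a) - toR (f (fun i => xor (a i) (decide (i ∈ B b))))) / 2 := by
    rw [hRpoly]
    simp only [derivative_sum, derivative_mul, derivative_C, zero_mul, zero_add, derivative_prod_finset,
      eval_finsetSum, eval_mul, eval_C, eval_prod, Finset.mul_sum]
    rw [Finset.sum_comm]
    refine Finset.sum_congr rfl fun b _ => ?_
    rw [Fintype.sum_eq_add (fun _ => false) (Function.update (fun _ => false) b true)]
    · rw [hxs0, hxs1]
      have h1 : ∏ j ∈ Finset.univ.erase b, eval 1
          (if (Function.update (fun _ : Fin k => false) b true) j = true then (C (1 / 2) * (1 - X) : ℝ[X])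
            else C (1 / 2) * (1 + X)) = 1 := by
        refine Finset.prod_eq_one fun j hj => ?_
        have : (Function.update (fun _ : Fin k => false) b true) j = false := by
          simp [Function.update_apply, Finset.ne_of_mem_erase hj]
        rw [this]
        norm_num
      rw [h1]
      norm_num
      ring
    · intro h
      have := congrFun h b
      simp at this
    · rintro y ⟨hy1, hy2⟩
      have : ∃ j, j ≠ b ∧ y j = true := by
        by_contra hcon
        push Not at hcon
        cases hyb : y b
        · apply hy1
          funext j
          by_cases hj : j = b
          · rw [hj, hyb]
          · simpa using hcon j hj
        · apply hy2
          funext j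
          by_cases hj : j = b
          · rw [hj, hyb]; simp
          · simpa [hj] using hcon j hj
      obtain ⟨j, hj, hyj⟩ := this
      rw [Finset.prod_eq_zero (Finset.mem_erase.2 ⟨hj, Finset.mem_univ j⟩)]
      · simp
      · simp [hyj]
  have hT : (derivative (Polynomial.Chebyshev.T ℝ (D : ℤ))).eval 1 = (D : ℝ) * D := by
    rw [Polynomial.Chebyshev.T_derivative_eq_U]
    simp
  have hle : ∀ Q : ℝ[X], Q.degree ≤ D → (∀ r ∈ Set.Icc (-1 : ℝ) 1, |Q.eval r| ≤ 1) →
      (derivative Q).eval 1 ≤ (D : ℝ) * D := by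
    intro Q h1 h2
    have := Polynomial.Chebyshev.eval_iterate_derivative_le_of_forall_abs_le_one (k := 1) (x := 1)
      le_rfl h1 h2
    rw [← hT]
    simpa using this
  have h1 := hle R hdeg hbd
  have h2 := hle (-R) (by rwa [degree_neg]) (by simpa using hbd)
  have h3 : (k : ℝ) / 2 ≤ (D : ℝ) * D := by
    rw [derivative_neg, eval_neg] at h2
    rw [hder] at h1 h2
    cases hfa : f a
    · have : ∀ b, f (fun i => xor (a i) (decide (i ∈ B b))) = true := by
        intro b; have := hs b; rw [hfa] at this; simpa using this
      simp [this, toR, hfa] at h2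
      linarith
    · have : ∀ b, f (fun i => xor (a i) (decide (i ∈ B b))) = false := by
        intro b; have := hs b; rw [hfa] at this; simpa using this
      simp [this, toR, hfa] at h1
      linarith
  have h4 : (k : ℝ) ≤ 2 * (sensitivity f : ℝ) ^ 4 := by
    rw [hD] at h3; push_cast at h3; nlinarith
  exact_mod_cast h4

noncomputable def xr {n : ℕ} (a : Fin n → Bool) (B : Finset (Fin n)) : Fin n → Bool :=
  fun i => xor (a i) (decide (i ∈ B))

lemma xr_empty {n : ℕ} (a : Fin n → Bool) : xr a ∅ = a := by funext i; simp [xr]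

lemma flp_xr {n : ℕ} (a : Fin n → Bool) (B : Finset (Fin n)) {i : Fin n} (hi : i ∈ B) :
    flp (xr a B) i = xr a (B.erase i) := by
  funext j
  by_cases h : j = i
  · subst h; simp [flp, xr, hi]
  · simp [flp, xr, h]

def MinSens {n : ℕ} (f : (Fin n → Bool) → Bool) (a : Fin n → Bool) (B : Finset (Fin n)) : Prop :=
  f (xr a B) ≠ f a ∧ ∀ B', B' ⊂ B → f (xr a B') = f a

lemma MinSens.card_le {n : ℕ} {f : (Fin n → Bool) → Bool} {a : Fin n → Bool} {B : Finset (Fin n)}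
    (h : MinSens f a B) : B.card ≤ sensitivity f := by
  refine le_trans (Finset.card_le_card ?_) (sens_le f (xr a B))
  intro i hi
  refine Finset.mem_filter.2 ⟨Finset.mem_univ _, ?_⟩
  rw [flp_xr a B hi, h.2 _ (Finset.erase_ssubset hi)]
  exact h.1.symm

lemma exists_minSens {n : ℕ} (f : (Fin n → Bool) → Bool) (a : Fin n → Bool) (B : Finset (Fin n))
    (h : f (xr a B) ≠ f a) : ∃ B', B' ⊆ B ∧ MinSens f a B' := by
  obtain ⟨B', hB', hmin⟩ := Finset.exists_min_image
    (B.powerset.filter (fun B' => f (xr a B') ≠ f a)) Finset.card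
    ⟨B, Finset.mem_filter.2 ⟨Finset.mem_powerset_self B, h⟩⟩
  obtain ⟨h1, h2⟩ := Finset.mem_filter.1 hB'
  rw [Finset.mem_powerset] at h1
  refine ⟨B', h1, h2, fun B'' hlt => ?_⟩
  by_contra hne
  have := hmin B'' (Finset.mem_filter.2 ⟨Finset.mem_powerset.2 (hlt.1.trans h1), hne⟩)
  exact absurd (Finset.card_lt_card hlt) (by omega)

lemma exists_cert {n : ℕ} (f : (Fin n → Bool) → Bool) (a : Fin n → Bool) :
    ∃ U : Finset (Fin n), U.card ≤ 2 * (sensitivity f) ^ 5 ∧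
      ∀ x, (∀ i ∈ U, x i = a i) → f x = f a := by
  let good : Finset (Finset (Fin n)) → Prop := fun F =>
    (∀ B ∈ F, MinSens f a B) ∧ ∀ B ∈ F, ∀ B' ∈ F, B ≠ B' → Disjoint B B'
  obtain ⟨F, hF, hmax⟩ := Finset.exists_max_image (Finset.univ.filter good) Finset.card
    ⟨∅, by simp [good]⟩
  obtain ⟨hF1, hF2⟩ : good F := (Finset.mem_filter.1 hF).2
  have hcard : F.card ≤ 2 * (sensitivity f) ^ 4 := by
    refine block_bound f a (fun b => (F.equivFin.symm b).1) ?_ ?_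
    · intro b b' hne
      refine hF2 _ (F.equivFin.symm b).2 _ (F.equivFin.symm b').2 fun h => hne ?_
      exact F.equivFin.symm.injective (Subtype.ext h)
    · intro b
      exact (hF1 _ (F.equivFin.symm b).2).1
  refine ⟨F.biUnion id, ?_, ?_⟩
  · calc (F.biUnion id).card ≤ F.card * sensitivity f :=
          Finset.card_biUnion_le_card_mul _ _ _ fun B hB => (hF1 B hB).card_le
      _ ≤ 2 * (sensitivity f) ^ 4 * sensitivity f := Nat.mul_le_mul_right _ hcard
      _ = 2 * (sensitivity f) ^ 5 := by ring
  · intro x hx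
    by_contra hne
    set Bx := Finset.univ.filter (fun i => x i ≠ a i) with hBx
    have hxr : xr a Bx = x := by
      funext i
      simp only [xr, hBx, Finset.mem_filter, Finset.mem_univ, true_and]
      cases x i <;> cases a i <;> simp
    obtain ⟨B, hB, hBm⟩ := exists_minSens f a Bx (by rwa [hxr])
    have hdisj : ∀ B' ∈ F, Disjoint B B' := by
      intro B' hB'
      refine Finset.disjoint_left.2 fun i hi hi' => ?_
      have h1 := (Finset.mem_filter.1 (hB hi)).2
      exact h1 (hx i (Finset.mem_biUnion.2 ⟨B', hB', hi'⟩))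
    have hBF : B ∉ F := by
      intro h
      have := hdisj B h
      rw [disjoint_self] at this
      apply hBm.1
      rw [this]
      exact congrArg f (xr_empty a)
    have hg : good (insert B F) := by
      refine ⟨?_, ?_⟩
      · intro B' hB'
        rcases Finset.mem_insert.1 hB' with rfl | h
        · exact hBm
        · exact hF1 _ h
      · intro B1 h1 B2 h2 h12
        rcases Finset.mem_insert.1 h1 with e1 | e1 <;> rcases Finset.mem_insert.1 h2 with e2 | e2
        · exact absurd (e1.trans e2.symm) h12
        · rw [e1]; exact hdisj _ e2
        · rw [e2]; exact (hdisj _ e1).symm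
        · exact hF2 _ e1 _ e2 h12
    have := hmax _ (Finset.mem_filter.2 ⟨Finset.mem_univ _, hg⟩)
    rw [Finset.card_insert_of_notMem hBF] at this
    omega

lemma card_coll {n m : ℕ} {j j' : Fin n} (h : j ≠ j') :
    (Finset.univ.filter (fun h : Fin n → Fin m => h j = h j')).card * m ≤ m ^ n := by
  have h1 : ((Finset.univ.filter (fun h : Fin n → Fin m => h j = h j')) ×ˢ
      (Finset.univ : Finset (Fin m))).card ≤ (Finset.univ : Finset (Fin n → Fin m)).card := by
    refine Finset.card_le_card_of_injOn (fun p => Function.update p.1 j p.2)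
      (fun _ _ => Finset.mem_coe.2 (Finset.mem_univ _)) ?_
    rintro ⟨g, v⟩ hg ⟨g', v'⟩ hg' heq
    simp only [Finset.coe_product, Set.mem_prod, Finset.mem_coe, Finset.mem_filter,
      Finset.mem_univ, true_and, and_true] at hg hg'
    simp only at heq
    have hv : v = v' := by simpa using congrFun heq j
    have hr : ∀ l, l ≠ j → g l = g' l := by
      intro l hl
      simpa [hl] using congrFun heq l
    refine Prod.ext ?_ hv
    funext l
    by_cases hl : l = j
    · subst hl
      simp only
      rw [hg, hg', hr j' h.symm]
    · exact hr l hl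
  simpa [Finset.card_product] using h1

lemma exists_hash {n m c : ℕ} (hm : 2 * c ^ 2 ≤ m) (hm0 : 0 < m) (Ds : Fin n → Finset (Fin n))
    (hD : ∀ i, (Ds i).card ≤ c) :
    ∃ h : Fin n → Fin m,
      n ≤ 2 * (Finset.univ.filter (fun i => Set.InjOn h (Ds i : Set (Fin n)))).card := by
  let bad : (Fin n → Fin m) → Finset (Fin n) := fun h =>
    Finset.univ.filter (fun i => ¬ Set.InjOn h (Ds i : Set (Fin n)))
  have h1 : ∀ i, (Finset.univ.filter
      (fun h : Fin n → Fin m => ¬ Set.InjOn h (Ds i : Set (Fin n)))).card * m ≤ c ^ 2 * m ^ n := by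
    intro i
    have hsub : (Finset.univ.filter
      (fun h : Fin n → Fin m => ¬ Set.InjOn h (Ds i : Set (Fin n)))) ⊆
      (Ds i).offDiag.biUnion (fun p => Finset.univ.filter (fun h : Fin n → Fin m => h p.1 = h p.2)) := by
      intro h hh
      have := (Finset.mem_filter.1 hh).2
      simp only [Set.InjOn] at this
      push Not at this
      obtain ⟨j, hj, j', hj', he, hne⟩ := this
      refine Finset.mem_biUnion.2 ⟨(j, j'), Finset.mem_offDiag.2 ⟨hj, hj', hne⟩, ?_⟩
      simpa using he
    calc _ ≤ (∑ p ∈ (Ds i).offDiag,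
          (Finset.univ.filter (fun h : Fin n → Fin m => h p.1 = h p.2)).card) * m :=
          Nat.mul_le_mul_right _ ((Finset.card_le_card hsub).trans Finset.card_biUnion_le)
      _ = ∑ p ∈ (Ds i).offDiag,
          (Finset.univ.filter (fun h : Fin n → Fin m => h p.1 = h p.2)).card * m := Finset.sum_mul ..
      _ ≤ ∑ p ∈ (Ds i).offDiag, m ^ n :=
          Finset.sum_le_sum fun p hp => card_coll (Finset.mem_offDiag.1 hp).2.2
      _ = (Ds i).offDiag.card * m ^ n := by simp
      _ ≤ c ^ 2 * m ^ n := by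
          refine Nat.mul_le_mul_right _ ?_
          rw [Finset.offDiag_card]
          have := Nat.mul_le_mul (hD i) (hD i)
          rw [sq]; omega
  have h2 : ∑ h, (bad h).card = ∑ i, (Finset.univ.filter
      (fun h : Fin n → Fin m => ¬ Set.InjOn h (Ds i : Set (Fin n)))).card := by
    simp only [bad, Finset.card_filter]
    exact Finset.sum_comm
  have h3 : (∑ h, (bad h).card) * m ≤ n * (c ^ 2 * m ^ n) := by
    rw [h2, Finset.sum_mul]
    refine (Finset.sum_le_sum fun i _ => h1 i).trans ?_
    simp
  by_contra hcon
  push Not at hcon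
  have h4 : ∀ h, n + 1 ≤ 2 * (bad h).card := by
    intro h
    have h5 := Finset.card_filter_add_card_filter_not (s := (Finset.univ : Finset (Fin n)))
      (fun i => Set.InjOn h (Ds i : Set (Fin n)))
    have h6 := hcon h
    simp only [Finset.card_univ, Fintype.card_fin] at h5
    have : (bad h).card = (Finset.univ.filter
      (fun i => ¬ Set.InjOn h (Ds i : Set (Fin n)))).card := rfl
    omega
  have h5 : m ^ n * (n + 1) ≤ 2 * ∑ h, (bad h).card := by
    rw [Finset.mul_sum]
    have := Finset.sum_le_sum (fun h (_ : h ∈ Finset.univ) => h4 h)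
    simpa using this
  have h6 : m ^ n * (n + 1) * m ≤ m ^ n * n * m := by
    calc m ^ n * (n + 1) * m ≤ 2 * (∑ h, (bad h).card) * m := Nat.mul_le_mul_right _ h5
      _ = 2 * ((∑ h, (bad h).card) * m) := by ring
      _ ≤ 2 * (n * (c ^ 2 * m ^ n)) := Nat.mul_le_mul_left _ h3
      _ = m ^ n * n * (2 * c ^ 2) := by ring
      _ ≤ m ^ n * n * m := Nat.mul_le_mul_left _ hm
  have h7 : 0 < m ^ n * m := by positivity
  nlinarith

lemma structure_lemma {n : ℕ} (f : (Fin n → Bool) → Bool) (hf : TrulyVariate f) (m : ℕ)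
    (hm : m = 2 * (4 * (sensitivity f) ^ 5 + 1) ^ 2) :
    ∃ (h : Fin n → Fin m) (T : Finset (Fin n)) (Y : Fin n → Fin m → Bool) (σ : Fin n → Bool),
      n ≤ 2 * (m * T.card) ∧ ∀ i ∈ T, ∀ z : Fin n → Bool,
        f (fun j => if j ∈ T then z j else Y i (h j)) = xor (σ i) (z i) := by
  have hm0 : 0 < m := by rw [hm]; positivity
  choose a ha using hf
  choose U hU1 hU2 using exists_cert f
  let Ds : Fin n → Finset (Fin n) := fun i => insert i (U (a i) ∪ U (flp (a i) i))
  obtain ⟨h, hh⟩ := exists_hash (m := m) (c := 4 * (sensitivity f) ^ 5 + 1) hm.ge hm0 Ds (by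
    intro i
    refine (Finset.card_insert_le _ _).trans ?_
    have := Finset.card_union_le (U (a i)) (U (flp (a i) i))
    have h1 := hU1 (a i)
    have h2 := hU1 (flp (a i) i)
    omega)
  set G := Finset.univ.filter (fun i => Set.InjOn h (Ds i : Set (Fin n))) with hG
  have : Nonempty (Fin m) := ⟨⟨0, hm0⟩⟩
  obtain ⟨u, hu⟩ : ∃ u : Fin m, G.card ≤ m * (G.filter (fun i => h i = u)).card := by
    by_contra hcon
    push Not at hcon
    have h1 : ∑ u : Fin m, (G.filter (fun i => h i = u)).card = G.card :=
      (Finset.card_eq_sum_card_fiberwise (fun _ _ => Finset.mem_coe.2 (Finset.mem_univ _))).symm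
    have h2 : ∑ u : Fin m, m * (G.filter (fun i => h i = u)).card < ∑ u : Fin m, G.card :=
      Finset.sum_lt_sum_of_nonempty Finset.univ_nonempty fun u _ => hcon u
    rw [← Finset.mul_sum, h1] at h2
    simp at h2
  refine ⟨h, G.filter (fun i => h i = u), fun i b => decide (∃ j ∈ Ds i, h j = b ∧ a i j = true),
    fun i => xor (f (a i)) (a i i), by omega, ?_⟩
  intro i hi z
  obtain ⟨hiG, hiu⟩ := Finset.mem_filter.1 hi
  have hinj : Set.InjOn h (Ds i : Set (Fin n)) := (Finset.mem_filter.1 hiG).2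
  set x : Fin n → Bool := fun j => if j ∈ G.filter (fun i => h i = u) then z j
    else decide (∃ j' ∈ Ds i, h j' = h j ∧ a i j' = true) with hx
  have hiD : i ∈ Ds i := Finset.mem_insert_self _ _
  have hxi : x i = z i := by simp only [hx, if_pos hi]
  have hxj : ∀ j ∈ Ds i, j ≠ i → x j = a i j := by
    intro j hj hne
    have hjT : j ∉ G.filter (fun i => h i = u) := by
      intro hjT
      have h1 := (Finset.mem_filter.1 hjT).2
      exact hne (hinj hj hiD (h1.trans hiu.symm))
    simp only [hx, if_neg hjT]
    cases haj : a i j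
    · simp only [decide_eq_false_iff_not]
      rintro ⟨j', hj', h1, h2⟩
      rw [hinj hj' hj h1, haj] at h2
      cases h2
    · simp only [decide_eq_true_eq]
      exact ⟨j, hj, rfl, haj⟩
  have hfa : f (flp (a i) i) ≠ f (a i) := by
    have := ha i
    convert! this using 3
    unfold flp
    congr!
  change f x = xor (xor (f (a i)) (a i i)) (z i)
  by_cases hz : z i = a i i
  · have : f x = f (a i) := by
      apply hU2
      intro j hj
      by_cases hne : j = i
      · subst hne; rw [hxi, hz]
      · exact hxj j (Finset.mem_insert_of_mem (Finset.mem_union_left _ hj)) hne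
    rw [this, hz]
    cases f (a i) <;> cases a i i <;> rfl
  · have : f x = f (flp (a i) i) := by
      apply hU2
      intro j hj
      by_cases hne : j = i
      · subst hne; rw [hxi, flp_same]
        revert hz
        cases z j <;> cases a j j <;> simp
      · rw [flp_ne _ hne]
        exact hxj j (Finset.mem_insert_of_mem (Finset.mem_union_right _ hj)) hne
    rw [this]
    revert hfa hz
    cases f (a i) <;> cases f (flp (a i) i) <;> cases a i i <;> cases z i <;> simp

lemma card_small {α : Type} (T : Finset α) (d : ℕ) :
    (T.powerset.filter (fun S => S.card ≤ d)).card ≤ (T.card + 1) ^ d := by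
  induction d with
  | zero =>
    have : T.powerset.filter (fun S => S.card ≤ 0) ⊆ {∅} := by
      intro S hS
      simpa using (Finset.mem_filter.1 hS).2
    simpa using Finset.card_le_card this
  | succ d ih =>
    have hsub : T.powerset.filter (fun S => S.card ≤ d + 1) ⊆
        ((T.powerset.filter (fun S => S.card ≤ d)) ×ˢ (Finset.insertNone T)).image
          (fun p => p.2.elim p.1 (fun a => insert a p.1)) := by
      intro S hS
      obtain ⟨h1, h2⟩ := Finset.mem_filter.1 hS
      rw [Finset.mem_powerset] at h1
      rw [Finset.mem_image]
      rcases Finset.eq_empty_or_nonempty S with h | ⟨a, ha⟩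
      · exact ⟨(∅, none), by simp, by simp [h]⟩
      · refine ⟨(S.erase a, some a), ?_, ?_⟩
        · simp only [Finset.mem_product, Finset.mem_filter, Finset.mem_powerset,
            Finset.some_mem_insertNone]
          refine ⟨⟨(Finset.erase_subset _ _).trans h1, ?_⟩, h1 ha⟩
          rw [Finset.card_erase_of_mem ha]; omega
        · simp [Finset.insert_erase ha]
    calc _ ≤ _ := Finset.card_le_card hsub
      _ ≤ _ := Finset.card_image_le
      _ = (T.powerset.filter (fun S => S.card ≤ d)).card * (T.card + 1) := by
          rw [Finset.card_product, Finset.card_insertNone]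
      _ ≤ (T.card + 1) ^ d * (T.card + 1) := Nat.mul_le_mul_right _ ih
      _ = (T.card + 1) ^ (d + 1) := by ring

lemma shatter_bound {n : ℕ} {κ : Type} [Fintype κ] (φ : κ → Fin n → ℝ) (T : Finset (Fin n))
    (A : Finset (Finset (Fin n)))
    (hA : ∀ B ∈ A, ∃ c : κ → ℝ, B = T.filter (fun i => 1 / 2 < ∑ k, c k * φ k i))
    (S : Finset (Fin n)) (hS : A.Shatters S) : S ⊆ T ∧ S.card ≤ Fintype.card κ := by
  have hST : S ⊆ T := by
    obtain ⟨B, hB, hSB⟩ := hS.exists_superset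
    obtain ⟨c, rfl⟩ := hA B hB
    exact hSB.trans (Finset.filter_subset _ _)
  refine ⟨hST, ?_⟩
  by_contra hlt
  push Not at hlt
  let L : (S → ℝ) →ₗ[ℝ] (κ → ℝ) :=
    { toFun := fun l k => ∑ i : S, l i * φ k i
      map_add' := by intro u v; funext k; simp [add_mul, Finset.sum_add_distrib]
      map_smul' := by intro a v; funext k; simp [Finset.mul_sum, mul_assoc] }
  have hker : L.ker ≠ ⊥ := by
    apply LinearMap.ker_ne_bot_of_finrank_lt
    simpa using hlt
  obtain ⟨l0, hl0, hl0ne⟩ := (Submodule.ne_bot_iff _).1 hker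
  -- normalise the sign
  obtain ⟨l, hl, hlne, hsum⟩ : ∃ l : S → ℝ, L l = 0 ∧ l ≠ 0 ∧ 0 ≤ ∑ i, l i := by
    rcases le_total 0 (∑ i, l0 i) with h | h
    · exact ⟨l0, LinearMap.mem_ker.1 hl0, hl0ne, h⟩
    · refine ⟨-l0, by rw [map_neg, LinearMap.mem_ker.1 hl0, neg_zero], neg_ne_zero.2 hl0ne, ?_⟩
      simpa using h
  have hpos : ∃ i, 0 < l i := by
    by_contra hcon
    push Not at hcon
    apply hlne
    have h0 : ∑ i, l i = 0 := le_antisymm (Finset.sum_nonpos fun i _ => hcon i) hsum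
    have := (Finset.sum_eq_zero_iff_of_nonpos (fun i _ => hcon i)).1 h0
    funext i
    exact this i (Finset.mem_univ _)
  obtain ⟨B, hB, hSB⟩ := hS (t := S.filter (fun i => ∃ h : i ∈ S, 0 < l ⟨i, h⟩))
    (Finset.filter_subset _ _)
  obtain ⟨c, hc⟩ := hA B hB
  have hzero : ∑ i : S, l i * ∑ k, c k * φ k i = 0 := by
    have h1 : ∀ k, ∑ i : S, l i * φ k i = 0 := fun k => congrFun hl k
    simp only [Finset.mul_sum]
    rw [Finset.sum_comm]
    refine Finset.sum_eq_zero fun k _ => ?_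
    have : ∑ i : S, l i * (c k * φ k i) = c k * ∑ i : S, l i * φ k i := by
      rw [Finset.mul_sum]; exact Finset.sum_congr rfl fun i _ => by ring
    rw [this, h1, mul_zero]
  have hiff : ∀ i : S, 0 < l i ↔ 1 / 2 < ∑ k, c k * φ k i := by
    intro i
    have h1 : i.1 ∈ S ∩ B ↔ i.1 ∈ S.filter (fun i => ∃ h : i ∈ S, 0 < l ⟨i, h⟩) := by rw [hSB]
    rw [hc] at h1
    simp only [Finset.mem_inter, Finset.mem_filter, i.2, hST i.2, true_and] at h1
    rw [h1]
    constructor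
    · intro h; exact ⟨trivial, h⟩
    · rintro ⟨_, h⟩; exact h
  have hlt2 : ∑ i : S, l i * (1 / 2) < ∑ i : S, l i * ∑ k, c k * φ k i := by
    obtain ⟨i0, hi0⟩ := hpos
    refine Finset.sum_lt_sum (fun i _ => ?_) ⟨i0, Finset.mem_univ _, ?_⟩
    · by_cases h : 0 < l i
      · exact mul_le_mul_of_nonneg_left ((hiff i).1 h).le h.le
      · have h2 : ∑ k, c k * φ k i ≤ 1 / 2 := not_lt.1 fun h' => h ((hiff i).2 h')
        exact mul_le_mul_of_nonpos_left h2 (not_lt.1 h)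
    · exact mul_lt_mul_of_pos_left ((hiff i0).1 hi0) hi0
  rw [hzero, ← Finset.sum_mul] at hlt2
  linarith

lemma counting {n : ℕ} {κ : Type} [Fintype κ] (φ : κ → Fin n → ℝ) (T : Finset (Fin n))
    (σ : Fin n → Bool) (c : (Fin n → Bool) → κ → ℝ)
    (hagree : (2 / 3 : ℝ) * (2 ^ n * T.card) ≤
      ∑ z : Fin n → Bool, ∑ i ∈ T,
        if ∑ k, c z k * φ k i = toR (xor (σ i) (z i)) then (1 : ℝ) else 0) :
    (T.card : ℝ) / 18 ≤ Fintype.card κ * Real.log (T.card + 1) := by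
  set N : ℝ := (T.card : ℝ) with hN
  let B : (Fin n → Bool) → Finset (Fin n) := fun z =>
    T.filter (fun i => 1 / 2 < ∑ k, c z k * φ k i)
  let A : Finset (Finset (Fin n)) := Finset.univ.image B
  let ρ : Finset (Fin n) → (Fin n → Bool) → Fin n → ℝ := fun D z i =>
    sg (decide (i ∈ D)) * sg (xor (σ i) (z i))
  let X : (Fin n → Bool) → ℝ := fun z => ∑ i ∈ T, ρ (B z) z i
  have hcardA : (A.card : ℝ) ≤ (N + 1) ^ Fintype.card κ := by
    have h1 := Finset.card_le_card_shatterer A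
    have h2 : A.shatterer ⊆ T.powerset.filter (fun S => S.card ≤ Fintype.card κ) := by
      intro S hS
      obtain ⟨h3, h4⟩ := shatter_bound φ T A (by
        intro D hD
        obtain ⟨z, -, rfl⟩ := Finset.mem_image.1 hD
        exact ⟨c z, rfl⟩) S (Finset.mem_shatterer.1 hS)
      exact Finset.mem_filter.2 ⟨Finset.mem_powerset.2 h3, h4⟩
    have h3 := (h1.trans (Finset.card_le_card h2)).trans (card_small T (Fintype.card κ))
    rw [hN]
    exact_mod_cast h3
  have hρ : ∀ z, ∀ i ∈ T, 2 * (if ∑ k, c z k * φ k i = toR (xor (σ i) (z i)) then (1 : ℝ) else 0) - 1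
      ≤ ρ (B z) z i := by
    intro z i hi
    split_ifs with h
    · have h1 : decide (i ∈ B z) = xor (σ i) (z i) := by
        have : i ∈ B z ↔ 1 / 2 < ∑ k, c z k * φ k i := by simp [B, hi]
        rw [h] at this
        cases hx : xor (σ i) (z i)
        · simp only [decide_eq_false_iff_not]
          rw [this, hx]; norm_num [toR]
        · simp only [decide_eq_true_eq]
          rw [this, hx]; norm_num [toR]
      simp only [ρ]
      rw [h1, sg_mul_self]; norm_num
    · simp only [ρ]
      cases (decide (i ∈ B z)) <;> cases (xor (σ i) (z i)) <;> norm_num [sg]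
  have hX : 2 ^ n * N / 3 ≤ ∑ z, X z := by
    have h1 : ∑ z : Fin n → Bool, ∑ i ∈ T,
        (2 * (if ∑ k, c z k * φ k i = toR (xor (σ i) (z i)) then (1 : ℝ) else 0) - 1) ≤ ∑ z, X z :=
      Finset.sum_le_sum fun z _ => Finset.sum_le_sum fun i hi => hρ z i hi
    simp only [Finset.sum_sub_distrib, ← Finset.mul_sum] at h1
    simp only [Finset.sum_const, Finset.card_univ, Fintype.card_pi, Fintype.card_bool,
      Finset.prod_const, Fintype.card_fin, nsmul_eq_mul, mul_one] at h1
    push_cast at h1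
    rw [← hN] at h1
    linarith
  have hlow : Real.exp (N / 9) * 2 ^ n ≤ ∑ z, Real.exp (X z / 3) := by
    have h1 : ∀ z, Real.exp (N / 9) * (X z / 3 - N / 9 + 1) ≤ Real.exp (X z / 3) := by
      intro z
      have := Real.add_one_le_exp (X z / 3 - N / 9)
      calc _ ≤ Real.exp (N / 9) * Real.exp (X z / 3 - N / 9) :=
            mul_le_mul_of_nonneg_left this (Real.exp_pos _).le
        _ = _ := by rw [← Real.exp_add]; congr 1; ring
    refine le_trans ?_ (Finset.sum_le_sum fun z _ => h1 z)
    rw [← Finset.mul_sum]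
    refine mul_le_mul_of_nonneg_left ?_ (Real.exp_pos _).le
    simp only [Finset.sum_add_distrib, Finset.sum_sub_distrib, ← Finset.sum_div]
    simp only [Finset.sum_const, Finset.card_univ, Fintype.card_pi, Fintype.card_bool,
      Finset.prod_const, Fintype.card_fin, nsmul_eq_mul, mul_one]
    push_cast
    linarith
  have hD : ∀ D : Finset (Fin n), ∑ z, Real.exp ((∑ i ∈ T, ρ D z i) / 3) =
      2 ^ n * Real.cosh (1 / 3) ^ T.card := by
    intro D
    have h1 : ∀ z, Real.exp ((∑ i ∈ T, ρ D z i) / 3) =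
        ∏ i, (if i ∈ T then Real.exp (sg (decide (i ∈ D)) * sg (xor (σ i) (z i)) / 3) else 1) := by
      intro z
      rw [Finset.sum_div, Real.exp_sum, Finset.prod_ite_mem, Finset.univ_inter]
    simp only [h1]
    rw [sum_prod_bool (fun i v => if i ∈ T then
      Real.exp (sg (decide (i ∈ D)) * sg (xor (σ i) v) / 3) else 1)]
    have h2 : ∀ i, ((if i ∈ T then Real.exp (sg (decide (i ∈ D)) * sg (xor (σ i) true) / 3) else 1) +
      (if i ∈ T then Real.exp (sg (decide (i ∈ D)) * sg (xor (σ i) false) / 3) else 1) : ℝ) =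
        2 * (if i ∈ T then Real.cosh (1 / 3) else 1) := by
      intro i
      split_ifs
      · rw [Real.cosh_eq]
        cases (decide (i ∈ D)) <;> cases (σ i) <;> simp [sg] <;> ring_nf
      · norm_num
    simp only [h2]
    rw [Finset.prod_mul_distrib, Finset.prod_ite_mem, Finset.univ_inter]
    simp
  have hup : ∑ z, Real.exp (X z / 3) ≤ A.card * (2 ^ n * Real.cosh (1 / 3) ^ T.card) := by
    calc ∑ z, Real.exp (X z / 3) ≤ ∑ z, ∑ D ∈ A, Real.exp ((∑ i ∈ T, ρ D z i) / 3) := by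
          refine Finset.sum_le_sum fun z _ => ?_
          exact Finset.single_le_sum (f := fun D => Real.exp ((∑ i ∈ T, ρ D z i) / 3))
            (fun _ _ => (Real.exp_pos _).le) (Finset.mem_image_of_mem B (Finset.mem_univ z))
      _ = _ := by
          rw [Finset.sum_comm]
          simp only [hD]
          rw [Finset.sum_const, nsmul_eq_mul]
  have hcosh : Real.cosh (1 / 3) ^ T.card ≤ Real.exp (N / 18) := by
    have h1 := Real.cosh_le_exp_half_sq (1 / 3)
    calc _ ≤ Real.exp ((1 / 3) ^ 2 / 2) ^ T.card :=
          pow_le_pow_left₀ (Real.cosh_pos _).le h1 _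
      _ = Real.exp (N / 18) := by rw [← Real.exp_nat_mul]; congr 1; rw [hN]; ring
  have hN0 : 0 ≤ N := by positivity
  have hfin : Real.exp (N / 9) ≤ (N + 1) ^ Fintype.card κ * Real.exp (N / 18) := by
    have h2n : (0 : ℝ) < 2 ^ n := by positivity
    refine le_of_mul_le_mul_right ?_ h2n
    calc _ ≤ _ := hlow.trans hup
      _ ≤ (N + 1) ^ Fintype.card κ * (2 ^ n * Real.exp (N / 18)) := by gcongr
      _ = _ := by ring
  have h5 : Real.exp (N / 18) ≤ (N + 1) ^ Fintype.card κ := by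
    have : Real.exp (N / 9) = Real.exp (N / 18) * Real.exp (N / 18) := by
      rw [← Real.exp_add]; congr 1; ring
    rw [this] at hfin
    exact le_of_mul_le_mul_right hfin (Real.exp_pos _)
  have h6 := Real.log_le_log (Real.exp_pos _) h5
  rwa [Real.log_exp, Real.log_pow] at h6

lemma poly_span {n m : ℕ} (P : MvPolynomial (Fin n) ℝ) (d : ℕ) (hP : P.totalDegree ≤ d)
    (T : Finset (Fin n)) (h : Fin n → Fin m) (Y : Fin n → Fin m → Bool) (z : Fin n → Bool) :
    ∃ c : {S : Finset (Fin m) // S.card ≤ d} → ℝ, ∀ i,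
      ∑ S, c S * ∏ b ∈ S.1, toR (Y i b) =
        evalBool (fun j => if j ∈ T then z j else Y i (h j)) P := by
  let φ : {S : Finset (Fin m) // S.card ≤ d} → Fin n → ℝ := fun S i => ∏ b ∈ S.1, toR (Y i b)
  have hmem : (fun i => evalBool (fun j => if j ∈ T then z j else Y i (h j)) P) ∈
      Submodule.span ℝ (Set.range φ) := by
    have h1 : (fun i => evalBool (fun j => if j ∈ T then z j else Y i (h j)) P) =
        ∑ e ∈ P.support, fun i => P.coeff e *
          ∏ j ∈ e.support, (toR (if j ∈ T then z j else Y i (h j))) ^ e j := by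
      funext i
      rw [Finset.sum_apply]
      unfold evalBool
      rw [MvPolynomial.eval_eq]
      rfl
    rw [h1]
    refine Submodule.sum_mem _ fun e he => ?_
    set E := e.support with hE
    have hcardE : ((E.filter (fun j => j ∉ T)).image h).card ≤ d := by
      calc _ ≤ (E.filter (fun j => j ∉ T)).card := Finset.card_image_le
        _ ≤ E.card := Finset.card_filter_le _ _
        _ = ∑ j ∈ E, 1 := by simp
        _ ≤ ∑ j ∈ E, e j := Finset.sum_le_sum fun j hj => by
            have := Finsupp.mem_support_iff.1 hj; omega
        _ ≤ P.totalDegree := MvPolynomial.le_totalDegree he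
        _ ≤ d := hP
    have h2 : (fun i => P.coeff e *
          ∏ j ∈ E, (toR (if j ∈ T then z j else Y i (h j))) ^ e j) =
        (P.coeff e * ∏ j ∈ E.filter (fun j => j ∈ T), toR (z j)) •
          φ ⟨(E.filter (fun j => j ∉ T)).image h, hcardE⟩ := by
      funext i
      simp only [Pi.smul_apply, smul_eq_mul, φ]
      rw [mul_assoc]
      congr 1
      have hpow : ∀ b : Bool, ∀ k : ℕ, k ≠ 0 → toR b ^ k = toR b := by
        intro b k hk; cases b <;> simp [toR, hk]
      rw [Finset.prod_congr rfl (g := fun j => toR (if j ∈ T then z j else Y i (h j)))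
        (fun j hj => hpow _ _ (Finsupp.mem_support_iff.1 hj))]
      rw [← Finset.prod_filter_mul_prod_filter_not E (fun j => j ∈ T)]
      congr 1
      · exact Finset.prod_congr rfl fun j hj => by rw [if_pos (Finset.mem_filter.1 hj).2]
      · rw [Finset.prod_congr rfl (g := fun j => toR (Y i (h j)))
          (fun j hj => by rw [if_neg (Finset.mem_filter.1 hj).2])]
        -- both sides are indicator functions
        have hind : ∀ (Q : Finset (Fin m)) , ∏ b ∈ Q, toR (Y i b) =
            if ∀ b ∈ Q, Y i b = true then 1 else 0 := by
          intro Q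
          simp only [toR]
          rw [Finset.prod_ite_zero]
          simp
        rw [hind]
        have hind2 : ∏ j ∈ E.filter (fun j => j ∉ T), toR (Y i (h j)) =
            if ∀ j ∈ E.filter (fun j => j ∉ T), Y i (h j) = true then 1 else 0 := by
          simp only [toR]
          rw [Finset.prod_ite_zero]
          simp
        rw [hind2]
        simp only [Finset.forall_mem_image]
    rw [h2]
    exact Submodule.smul_mem _ _ (Submodule.subset_span ⟨_, rfl⟩)
  obtain ⟨c, hc⟩ := (Submodule.mem_span_range_iff_exists_fun ℝ).1 hmem
  refine ⟨c, fun i => ?_⟩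
  have := congrFun hc i
  rw [Finset.sum_apply] at this
  simpa [φ] using this

lemma exists_probPoly {n : ℕ} (f : (Fin n → Bool) → Bool) : ∃ d, HasProbPoly f (1/3) d := by
  let P : MvPolynomial (Fin n) ℝ := ∑ a : Fin n → Bool, MvPolynomial.C (toR (f a)) *
    ∏ i, (if a i then MvPolynomial.X i else 1 - MvPolynomial.X i)
  refine ⟨P.totalDegree, 1, fun _ => 1, fun _ => P, fun _ => zero_le_one, by simp,
    fun _ => le_rfl, fun a => ?_⟩
  have hev : evalBool a P = if f a then (1:ℝ) else 0 := by
    simp only [P, evalBool, map_sum, map_mul, map_prod, MvPolynomial.eval_C]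
    rw [Finset.sum_eq_single a]
    · rw [Finset.prod_eq_one, mul_one]
      · rfl
      · intro i _
        cases h : a i <;> simp [h]
    · intro b _ hb
      obtain ⟨i, hi⟩ := Function.ne_iff.1 hb
      rw [Finset.prod_eq_zero (Finset.mem_univ i), mul_zero]
      cases h : a i <;> cases h' : b i <;> simp_all
    · simp
  rw [Finset.sum_eq_zero]
  · norm_num
  · intro i hi
    exact absurd hev (Finset.mem_filter.1 hi).2

lemma averaging {n : ℕ} (f : (Fin n → Bool) → Bool) (d : ℕ) (hd : HasProbPoly f (1/3) d)
    (T : Finset (Fin n)) (x : (Fin n → Bool) → Fin n → (Fin n → Bool)) :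
    ∃ P : MvPolynomial (Fin n) ℝ, P.totalDegree ≤ d ∧
      (2/3:ℝ) * (2^n * T.card) ≤ ∑ z, ∑ i ∈ T,
        if evalBool (x z i) P = toR (f (x z i)) then (1:ℝ) else 0 := by
  obtain ⟨k, w, P, hw, hw1, hdeg, herr⟩ := hd
  by_contra hcon
  push Not at hcon
  have hpt : ∀ a, (2/3:ℝ) ≤ ∑ l, w l * (if evalBool a (P l) = toR (f a) then (1:ℝ) else 0) := by
    intro a
    have h1 := herr a
    rw [Finset.sum_filter] at h1
    have h2 : ∑ l, w l * (if evalBool a (P l) = toR (f a) then (1:ℝ) else 0) +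
        ∑ l, (if evalBool a (P l) ≠ (if f a then (1:ℝ) else 0) then w l else 0) = 1 := by
      rw [← Finset.sum_add_distrib]
      refine Eq.trans ?_ hw1
      refine Finset.sum_congr rfl fun l _ => ?_
      by_cases h : evalBool a (P l) = toR (f a)
      · have h' : evalBool a (P l) = if f a then (1:ℝ) else 0 := h
        rw [if_pos h, if_neg (not_not.2 h')]; ring
      · have h' : evalBool a (P l) ≠ if f a then (1:ℝ) else 0 := h
        rw [if_neg h, if_pos h']; ring
    linarith
  have hsum : (2/3:ℝ) * (2^n * T.card) ≤ ∑ l, w l * ∑ z, ∑ i ∈ T,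
        (if evalBool (x z i) (P l) = toR (f (x z i)) then (1:ℝ) else 0) := by
    calc (2/3:ℝ) * (2^n * T.card) = ∑ z : Fin n → Bool, ∑ i ∈ T, (2/3:ℝ) := by
          simp; ring
      _ ≤ ∑ z, ∑ i ∈ T, ∑ l, w l *
          (if evalBool (x z i) (P l) = toR (f (x z i)) then (1:ℝ) else 0) :=
          Finset.sum_le_sum fun z _ => Finset.sum_le_sum fun i _ => hpt _
      _ = _ := by
          simp_rw [Finset.mul_sum]
          conv_rhs => rw [Finset.sum_comm]
          refine Finset.sum_congr rfl fun z _ => ?_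
          rw [Finset.sum_comm]
  have hlt : ∑ l, w l * ∑ z, ∑ i ∈ T,
        (if evalBool (x z i) (P l) = toR (f (x z i)) then (1:ℝ) else 0) <
        ∑ l, w l * ((2/3:ℝ) * (2^n * T.card)) := by
    have hex : ∃ l, 0 < w l := by
      by_contra hno
      push Not at hno
      have : ∑ l, w l ≤ 0 := Finset.sum_nonpos fun l _ => hno l
      linarith
    obtain ⟨l0, hl0⟩ := hex
    refine Finset.sum_lt_sum (fun l _ => ?_) ⟨l0, Finset.mem_univ _, ?_⟩
    · exact mul_le_mul_of_nonneg_left (hcon _ (hdeg l)).le (hw l)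
    · exact mul_lt_mul_of_pos_left (hcon _ (hdeg l0)) hl0
  rw [← Finset.sum_mul, hw1, one_mul] at hlt
  linarith

lemma log_bound (N K : ℝ) (hN : 0 ≤ N) (hK : 0 ≤ K) (h : N / 18 ≤ K * Real.log (N + 1)) :
    N ≤ 1296 * K ^ 2 := by
  have h1 : Real.log (N + 1) ≤ 2 * Real.sqrt N := by
    have h2 : N + 1 ≤ (Real.sqrt N + 1) ^ 2 := by
      nlinarith [Real.sq_sqrt hN, Real.sqrt_nonneg N]
    calc Real.log (N + 1) ≤ Real.log ((Real.sqrt N + 1) ^ 2) :=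
          Real.log_le_log (by linarith) h2
      _ = 2 * Real.log (Real.sqrt N + 1) := by rw [Real.log_pow]; norm_num
      _ ≤ 2 * Real.sqrt N := by
          have := Real.log_le_sub_one_of_pos (x := Real.sqrt N + 1)
            (by linarith [Real.sqrt_nonneg N])
          linarith
  have h3 : N / 18 ≤ K * (2 * Real.sqrt N) := h.trans (mul_le_mul_of_nonneg_left h1 hK)
  have hs := Real.sqrt_nonneg N
  have hsq := Real.sq_sqrt hN
  rcases hs.eq_or_lt with h0 | h0
  · rw [← h0] at hsq
    nlinarith [sq_nonneg K]
  · have : Real.sqrt N ≤ 36 * K := by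
      by_contra hc
      push Not at hc
      nlinarith
    nlinarith

lemma main_bound {n : ℕ} (f : (Fin n → Bool) → Bool) (hf : TrulyVariate f)
    (hs : 2 ≤ sensitivity f) (d : ℕ) (hd : HasProbPoly f (1/3) d) :
    n ≤ (sensitivity f) ^ (30 + 36 * d) := by
  set s := sensitivity f with hsdef
  obtain ⟨m, hm⟩ : ∃ m, m = 2 * (4 * s ^ 5 + 1) ^ 2 := ⟨_, rfl⟩
  obtain ⟨h, T, Y, σ, hn, hT⟩ := structure_lemma f hf m hm
  obtain ⟨P, hPd, hP⟩ := averaging f d hd T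
    (fun z i => fun j => if j ∈ T then z j else Y i (h j))
  choose c hc using fun z => poly_span P d hPd T h Y z
  have hcount := counting (κ := {S : Finset (Fin m) // S.card ≤ d})
    (fun S i => ∏ b ∈ S.1, toR (Y i b)) T σ c (by
      refine hP.trans (le_of_eq ?_)
      refine Finset.sum_congr rfl fun z _ => Finset.sum_congr rfl fun i hi => ?_
      rw [hc z i, hT i hi z])
  have hcard : Fintype.card {S : Finset (Fin m) // S.card ≤ d} ≤ (m + 1) ^ d := by
    have := card_small (Finset.univ : Finset (Fin m)) d
    rw [Finset.powerset_univ, Finset.card_univ, Fintype.card_fin] at this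
    rw [Fintype.card_subtype]
    convert this
  have hlog : (0:ℝ) ≤ Real.log (T.card + 1) := Real.log_nonneg (by
    have : (0:ℝ) ≤ T.card := Nat.cast_nonneg _
    linarith)
  have hN := log_bound (T.card : ℝ) (((m + 1) ^ d : ℕ) : ℝ) (Nat.cast_nonneg _)
    (Nat.cast_nonneg _) (hcount.trans (mul_le_mul_of_nonneg_right (by exact_mod_cast hcard) hlog))
  have hN' : T.card ≤ 1296 * ((m + 1) ^ d) ^ 2 := by exact_mod_cast hN
  have hs0 : 0 < s := by omega
  have h5 : 4 * s ^ 5 + 1 ≤ s ^ 8 := by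
    have h1 : 2 ^ 3 ≤ s ^ 3 := Nat.pow_le_pow_left hs 3
    have h2 : 1 ≤ s ^ 5 := Nat.one_le_pow _ _ hs0
    have h3 : s ^ 8 = s ^ 3 * s ^ 5 := by ring
    have := Nat.mul_le_mul_right (s ^ 5) h1
    omega
  have hm17 : m ≤ s ^ 17 := by
    rw [hm]
    calc 2 * (4 * s ^ 5 + 1) ^ 2 ≤ s * (s ^ 8) ^ 2 :=
          Nat.mul_le_mul hs (Nat.pow_le_pow_left h5 2)
      _ = s ^ 17 := by ring
  have hm18 : m + 1 ≤ s ^ 18 := by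
    have h2 : 1 ≤ s ^ 17 := Nat.one_le_pow _ _ hs0
    have h3 : s ^ 18 = s * s ^ 17 := by ring
    have := Nat.mul_le_mul_right (s ^ 17) hs
    omega
  have h12 : 2592 ≤ s ^ 12 := le_trans (by norm_num) (Nat.pow_le_pow_left hs 12)
  calc n ≤ 2 * (m * T.card) := hn
    _ ≤ 2 * (m * (1296 * ((m + 1) ^ d) ^ 2)) := by gcongr
    _ = 2592 * m * ((m + 1) ^ d) ^ 2 := by ring
    _ ≤ s ^ 12 * s ^ 18 * ((s ^ 18) ^ d) ^ 2 := by
        gcongr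
        omega
    _ = s ^ (30 + 36 * d) := by ring

theorem low_sensitivity_lower_bound :
    ∃ a b : ℝ, 0 < a ∧ 0 < b ∧ ∀ n : ℕ, 2 ≤ n →
      ∀ f : (Fin n → Bool) → Bool, TrulyVariate f → 2 ≤ sensitivity f →
        a * (Real.logb 2 n - b * Real.logb 2 (sensitivity f)) /
            Real.logb 2 (sensitivity f)
          ≤ (pdeg (1/3) f : ℝ) := by
  refine ⟨1/36, 30, by norm_num, by norm_num, fun n hn f hf hs => ?_⟩
  have hd : HasProbPoly f (1/3) (pdeg (1/3) f) :=
    Nat.sInf_mem (s := {d | HasProbPoly f (1/3) d}) (exists_probPoly f)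
  have hb := main_bound f hf hs _ hd
  have hsR : (2:ℝ) ≤ (sensitivity f : ℝ) := by exact_mod_cast hs
  have hL : 0 < Real.logb 2 (sensitivity f) := Real.logb_pos (by norm_num) (by linarith)
  have hbR : (n:ℝ) ≤ (sensitivity f : ℝ) ^ (30 + 36 * pdeg (1/3) f) := by exact_mod_cast hb
  have hn0 : (0:ℝ) < n := by
    have : 0 < n := by omega
    exact_mod_cast this
  have hlog := Real.logb_le_logb_of_le (b := 2) (by norm_num) hn0 hbR
  rw [Real.logb_pow] at hlog
  push_cast at hlog
  rw [div_le_iff₀ hL]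
  linarith
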